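/- arXiv:1901.02827 — 3 statements merged into one kernel-verified Lean document; each statement's English description precedes it below -/
import Mathlib

section
/- Let C, X, C̄, X̄ be schemes, all assumed separated. Suppose given a commutative square of morphisms of schemes f : C → X, f̄ : C̄ → X̄, j : X → X̄ and j_C : C → C̄ with f̄ ∘ j_C = j ∘ f, such that f is proper, j and j_C are open immersions, and the image of j_C is dense in C̄. Then the square is necessarily Cartesian, i.e. C together with the maps f and j_C is the fibre product X ×_{X̄} C̄ of j : X → X̄ and f̄ : C̄ → X̄ (equivalently, j_C identifies C with the open subscheme f̄^{-1}(X) of C̄). -/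
open AlgebraicGeometry CategoryTheory CategoryTheory.Limits

/-!
The comparison morphism `l : C ⟶ X ×[X̄] C̄` is an open immersion because its composite with the
open immersion `X ×[X̄] C̄ ⟶ C̄` is `j_C`, and it is dominant because `j_C` is. Its composite with
the separated projection to `X` is the universally closed morphism `f`, so `l` is universally
closed as well. Its image is therefore both dense and closed, and `l` is an isomorphism.
-/

universe u

lemma isIso_of_isOpenImmersion_of_universallyClosed_of_isDominant {X Y : Scheme.{u}} (f : X ⟶ Y)
    [IsOpenImmersion f] [UniversallyClosed f] [IsDominant f] : IsIso f :=
  (isIso_iff_isOpenImmersion_and_surjective f).mpr ⟨inferInstance, inferInstance⟩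

section

variable {C X Cb Xb : Scheme.{u}} {f : C ⟶ X} {fb : Cb ⟶ Xb} {j : X ⟶ Xb} {jC : C ⟶ Cb}
  (comm : f ≫ j = jC ≫ fb)

lemma universallyClosed_pullbackLift [UniversallyClosed f] [IsSeparated fb] :
    UniversallyClosed (pullback.lift f jC comm) := by
  have : UniversallyClosed (pullback.lift f jC comm ≫ pullback.fst j fb) := by
    rwa [pullback.lift_fst]
  exact .of_comp_of_isSeparated _ (pullback.fst j fb)

lemma isOpenImmersion_pullbackLift [Mono j] [IsOpenImmersion jC] :
    IsOpenImmersion (pullback.lift f jC comm) := by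
  have : IsOpenImmersion (pullback.lift f jC comm ≫ pullback.snd j fb) := by
    rwa [pullback.lift_snd]
  exact MorphismProperty.of_postcomp (W' := .monomorphisms Scheme) _ _ (pullback.snd j fb)
    (.infer_property _) this

lemma isDominant_pullbackLift [IsOpenImmersion j] [IsDominant jC] :
    IsDominant (pullback.lift f jC comm) := by
  have : IsDominant (pullback.lift f jC comm ≫ pullback.snd j fb) := by
    rwa [pullback.lift_snd]
  exact .of_comp_of_isOpenImmersion _ (pullback.snd j fb)

end

theorem compactification_square_isPullback_general {C X Cb Xb : Scheme.{u}}
    {f : C ⟶ X} {fb : Cb ⟶ Xb} {j : X ⟶ Xb} {jC : C ⟶ Cb} (comm : f ≫ j = jC ≫ fb)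
    [UniversallyClosed f] [IsSeparated fb]
    [IsOpenImmersion j] [IsOpenImmersion jC] [IsDominant jC] :
    IsPullback f jC j fb := by
  have := universallyClosed_pullbackLift comm
  have := isOpenImmersion_pullbackLift comm
  have := isDominant_pullbackLift comm
  have := isIso_of_isOpenImmersion_of_universallyClosed_of_isDominant (pullback.lift f jC comm)
  exact .of_iso_pullback ⟨comm⟩ (asIso (pullback.lift f jC comm))
    (pullback.lift_fst f jC comm) (pullback.lift_snd f jC comm)

/-- **Lemma (compactification squares are Cartesian).**
Given separated schemes `C`, `X`, `C̄`, `X̄`, a commutative square with `f : C ⟶ X` proper,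
`j : X ⟶ X̄` and `j_C : C ⟶ C̄` open immersions, and `j_C` with dense image, the square is
Cartesian, i.e. `C` is the fibre product of `j` and `f̄`. -/
theorem compactification_square_isPullback
    (C X Cb Xb : Scheme) [C.IsSeparated] [X.IsSeparated] [Cb.IsSeparated] [Xb.IsSeparated]
    (f : C ⟶ X) (fb : Cb ⟶ Xb) (j : X ⟶ Xb) (jC : C ⟶ Cb)
    (comm : f ≫ j = jC ≫ fb)
    [IsProper f] [IsOpenImmersion j] [IsOpenImmersion jC]
    (hdense : DenseRange jC.base) :
    IsPullback f jC j fb := by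
  have : IsDominant jC := ⟨hdense⟩
  exact compactification_square_isPullback_general comm
end

section
/- Let k be a field of characteristic p > 0, let r ≥ 1 be an integer and set q = p^r. Let A be an étale k-algebra (i.e. A is formally étale over k and of finite presentation). Then the relative Frobenius map F : A^{(q)} → A, namely the unique k-algebra homomorphism sending a simple tensor a ⊗ λ to a^{q}·λ, is bijective (an isomorphism of k-algebras). -/
open scoped TensorProduct

universe u

/-- The Frobenius twist of the base field: `TwistK K p r` is a copy of `K`, regarded as a
`K`-algebra via the `r`-th iterate of the Frobenius `x ↦ x ^ p ^ r`. For a `K`-algebra `A`,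
the Frobenius twist `A^{(p^r)}` is then `A ⊗[K] TwistK K p r`. -/
def TwistK (K : Type u) (p r : ℕ) : Type u := K

instance (K : Type u) [Field K] (p r : ℕ) : Field (TwistK K p r) :=
  inferInstanceAs (Field K)

noncomputable instance (K : Type u) [Field K] (p r : ℕ) [Fact p.Prime] [CharP K p] :
    Algebra K (TwistK K p r) :=
  (show K →+* TwistK K p r from iterateFrobenius K p r).toAlgebra

/-- The tautological identification of `K` with its copy `TwistK K p r` (as rings). -/
def TwistK.up (K : Type u) (p r : ℕ) (x : K) : TwistK K p r := x

/-!
The relative Frobenius `F : A^{(q)} → A` is a map between étale algebras over the same base, hence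
is itself étale. It is moreover `p`-radical: `F` composed with `a ↦ a ⊗ 1` is the `q`-power map on
either side, so every `a ^ q` lies in the image of `F` and the kernel of `F` is nil.

An étale `p`-radical map `R → S` is bijective. The kernel of `S ⊗[R] S → S` is generated by elements
`1 ⊗ s - s ⊗ 1`, which are nilpotent; as `R → S` is unramified, this kernel is also idempotent and
finitely generated, so it vanishes and `R → S` is an epimorphism. Being integral of finite type,
hence finite, `R → S` is then surjective, and the same argument, applied to the nil kernel of
`R → S`, makes it injective.
-/

section EtaleRadical

theorem eq_bot_of_isIdempotentElem_of_le_nilradical {R : Type*} [CommRing R] {I : Ideal R}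
    (hfg : I.FG) (hidem : IsIdempotentElem I) (hI : I ≤ nilradical R) : I = ⊥ :=
  Submodule.eq_bot_of_le_smul_of_le_jacobson_bot I I hfg hidem.ge
    (hI.trans Ideal.radical_le_jacobson)

variable (R S : Type*) [CommRing R] [CommRing S] [Algebra R S]

theorem isEpi_of_formallyUnramified_of_ideal_le_nilradical [Algebra.EssFiniteType R S]
    [Algebra.FormallyUnramified R S]
    (h : KaehlerDifferential.ideal R S ≤ nilradical (S ⊗[R] S)) : Algebra.IsEpi R S := by
  have hidem : IsIdempotentElem (KaehlerDifferential.ideal R S) :=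
    (Ideal.cotangent_subsingleton_iff _).mp (inferInstanceAs (Subsingleton Ω[S⁄R]))
  have hbot : KaehlerDifferential.ideal R S = ⊥ :=
    eq_bot_of_isIdempotentElem_of_le_nilradical (KaehlerDifferential.ideal_fg R S) hidem h
  refine (Algebra.isEpi_iff_forall_one_tmul_eq R S).mpr fun s ↦ sub_eq_zero.mp ?_
  rw [← Ideal.mem_bot, ← hbot]
  exact KaehlerDifferential.one_smul_sub_smul_one_mem_ideal R s

variable {R S} in
theorem injective_algebraMap_of_etale_of_surjective [Algebra.Etale R S]
    (hsurj : Function.Surjective (algebraMap R S))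
    (hker : RingHom.ker (algebraMap R S) ≤ nilradical R) :
    Function.Injective (algebraMap R S) := by
  have hfg : (RingHom.ker (algebraMap R S)).FG :=
    Algebra.FinitePresentation.ker_fG_of_surjective (Algebra.ofId R S) hsurj
  have hidem : IsIdempotentElem (RingHom.ker (algebraMap R S)) :=
    (Algebra.FormallyEtale.iff_of_surjective hsurj).mp inferInstance
  exact (RingHom.injective_iff_ker_eq_bot _).mpr
    (eq_bot_of_isIdempotentElem_of_le_nilradical hfg hidem hker)

theorem kaehlerDifferential_ideal_le_pNilradical_of_isPRadical (p : ℕ) [ExpChar S p]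
    [IsPRadical (algebraMap R S) p] :
    KaehlerDifferential.ideal R S ≤ pNilradical (S ⊗[R] S) p := by
  have hinj : Function.Injective
      (Algebra.TensorProduct.includeLeftRingHom : S →+* S ⊗[R] S) :=
    Function.LeftInverse.injective (g := Algebra.TensorProduct.lmul' R) fun s ↦ by simp
  have : ExpChar (S ⊗[R] S) p := expChar_of_injective_ringHom hinj p
  rw [← KaehlerDifferential.span_range_eq_ideal, Ideal.span_le]
  rintro _ ⟨s, rfl⟩
  obtain ⟨n, a, ha⟩ := IsPRadical.pow_mem (algebraMap R S) p s
  refine sub_mem_pNilradical_iff_pow_expChar_pow_eq.mpr ⟨n, ?_⟩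
  calc (1 ⊗ₜ[R] s) ^ p ^ n = 1 ⊗ₜ[R] algebraMap R S a := by
        rw [Algebra.TensorProduct.tmul_pow, one_pow, ha]
    _ = algebraMap R S a ⊗ₜ[R] 1 := by
        rw [Algebra.algebraMap_eq_smul_one, TensorProduct.smul_tmul]
    _ = (s ⊗ₜ[R] 1) ^ p ^ n := by
        rw [Algebra.TensorProduct.tmul_pow, one_pow, ha]

theorem isIntegral_of_isPRadical (p : ℕ) [ExpChar S p] [IsPRadical (algebraMap R S) p] :
    Algebra.IsIntegral R S where
  isIntegral s := by
    obtain ⟨n, a, ha⟩ := IsPRadical.pow_mem (algebraMap R S) p s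
    exact IsIntegral.of_pow (pow_pos (expChar_pos S p) n) (ha ▸ isIntegral_algebraMap)

theorem bijective_algebraMap_of_etale_of_isPRadical [Algebra.Etale R S] (p : ℕ) [ExpChar S p]
    [IsPRadical (algebraMap R S) p] :
    Function.Bijective (algebraMap R S) := by
  have : Algebra.IsEpi R S := isEpi_of_formallyUnramified_of_ideal_le_nilradical R S
    ((kaehlerDifferential_ideal_le_pNilradical_of_isPRadical R S p).trans pNilradical_le_nilradical)
  have : Algebra.IsIntegral R S := isIntegral_of_isPRadical R S p
  have : Module.Finite R S := Algebra.IsIntegral.finite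
  have hsurj : Function.Surjective (algebraMap R S) :=
    Algebra.isEpi_iff_surjective_algebraMap_of_finite.mp inferInstance
  have hker : RingHom.ker (algebraMap R S) ≤ nilradical R :=
    (IsPRadical.ker_le (algebraMap R S) p).trans pNilradical_le_nilradical
  exact ⟨injective_algebraMap_of_etale_of_surjective hsurj hker, hsurj⟩

end EtaleRadical

section RingHom

variable {R S T : Type*} [CommRing R] [CommRing S] [CommRing T]

theorem etale_comp {f : R →+* S} {g : S →+* T} (hg : g.Etale) (hf : f.Etale) :
    (g.comp f).Etale := by
  algebraize [f, g, g.comp f]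
  exact Algebra.Etale.comp R S T

theorem etale_of_etale_comp {f : R →+* S} {g : S →+* T} (hf : f.Etale) (hgf : (g.comp f).Etale) :
    g.Etale := by
  algebraize [f, g, g.comp f]
  exact Algebra.Etale.of_restrictScalars R S T

theorem bijective_of_etale_of_isPRadical {f : R →+* S} (hf : f.Etale) (p : ℕ) [ExpChar S p]
    [IsPRadical f p] : Function.Bijective f := by
  algebraize [f]
  have : IsPRadical (algebraMap R S) p := ‹IsPRadical f p›
  exact bijective_algebraMap_of_etale_of_isPRadical R S p

theorem expChar_of_ringHom_of_ringHom (f : R →+* S) (g : S →+* R) (p : ℕ) [hR : ExpChar R p] :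
    ExpChar S p := by
  rcases hR with _ | hp
  · have : CharZero S := g.charZero
    exact .zero
  · obtain ⟨q, hq⟩ := CharP.exists S
    obtain rfl : q = p :=
      Nat.dvd_antisymm (CharP.dvd_of_ringHom f p q) (CharP.dvd_of_ringHom g q p)
    exact .prime hp

end RingHom

section RelativeFrobenius

variable {R S A : Type*} [CommRing R] [CommRing S] [CommRing A] [Algebra R S] [Algebra R A]

/-- The universal property of `A ⊗[R] S` as a pushout of commutative rings. Unlike
`Algebra.TensorProduct.lift`, it does not fix an `R`-algebra structure on the target: for the
relative Frobenius the target `A` is an `R`-algebra in two different ways. -/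
noncomputable def tensorProductLiftRingHom {C : Type*} [CommRing C] (f : A →+* C) (g : S →+* C)
    (h : f.comp (algebraMap R A) = g.comp (algebraMap R S)) : A ⊗[R] S →+* C :=
  letI := (f.comp (algebraMap R A)).toAlgebra
  (Algebra.TensorProduct.lift (R := R) (S := R) ⟨f, fun _ ↦ rfl⟩
    ⟨g, fun x ↦ (RingHom.congr_fun h x).symm⟩ fun _ _ ↦ Commute.all _ _).toRingHom

theorem tensorProductLiftRingHom_tmul {C : Type*} [CommRing C] (f : A →+* C) (g : S →+* C)
    (h : f.comp (algebraMap R A) = g.comp (algebraMap R S)) (a : A) (s : S) :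
    tensorProductLiftRingHom f g h (a ⊗ₜ s) = f a * g s :=
  rfl

attribute [local instance] Algebra.TensorProduct.rightAlgebra in
theorem etale_includeRight [Algebra.Etale R A] :
    (Algebra.TensorProduct.includeRight (R := R) (A := A) (B := S)).toRingHom.Etale :=
  RingHom.etale_algebraMap.mpr
    (Algebra.Etale.of_equiv (Algebra.TensorProduct.commRight R S A : S ⊗[R] A ≃ₐ[S] A ⊗[R] S))

variable {p r : ℕ} {e : S ≃+* R} (he : ∀ x, e (algebraMap R S x) = x ^ p ^ r)

include he in
theorem algebraMap_ringEquiv_apply (s : S) : algebraMap R S (e s) = s ^ p ^ r :=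
  e.injective (by rw [he, map_pow])

/-- The relative Frobenius `A^{(p^r)} → A` of an `R`-algebra `A`. The twist `A^{(p^r)}` is encoded
as `A ⊗[R] S`, where `e` identifies `S` with `R` in such a way that the structure map `R → S`
becomes the `r`-th iterate of the Frobenius. -/
noncomputable def relativeFrobenius [ExpChar A p] : A ⊗[R] S →+* A :=
  tensorProductLiftRingHom (iterateFrobenius A p r) ((algebraMap R A).comp e) <| by
    ext x
    simp [iterateFrobenius_def, he]

variable [ExpChar A p]

theorem relativeFrobenius_tmul (a : A) (s : S) :
    relativeFrobenius he (a ⊗ₜ s) = a ^ p ^ r * algebraMap R A (e s) :=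
  tensorProductLiftRingHom_tmul _ _ _ a s

theorem relativeFrobenius_comp_includeRight :
    (relativeFrobenius he).comp (Algebra.TensorProduct.includeRight (R := R)).toRingHom =
      (algebraMap R A).comp e := by
  ext s
  simp [relativeFrobenius_tmul]

include he in
theorem expChar_tensorProduct_of_frobenius : ExpChar (A ⊗[R] S) p :=
  expChar_of_ringHom_of_ringHom Algebra.TensorProduct.includeLeftRingHom (relativeFrobenius he) p

theorem relativeFrobenius_tmul_one (x : A ⊗[R] S) :
    relativeFrobenius he x ⊗ₜ[R] (1 : S) = x ^ p ^ r := by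
  have := expChar_tensorProduct_of_frobenius (A := A) he
  induction x with
  | zero => simp [(expChar_pos A p).ne']
  | tmul a s =>
    rw [relativeFrobenius_tmul, mul_comm, ← Algebra.smul_def, TensorProduct.smul_tmul,
      ← Algebra.algebraMap_eq_smul_one, algebraMap_ringEquiv_apply he,
      Algebra.TensorProduct.tmul_pow]
  | add x y hx hy => rw [map_add, TensorProduct.add_tmul, hx, hy, add_pow_expChar_pow]

theorem isPRadical_relativeFrobenius : IsPRadical (relativeFrobenius (A := A) he) p where
  pow_mem' a := ⟨r, a ⊗ₜ 1, by simp [relativeFrobenius_tmul]⟩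
  ker_le' x hx := mem_pNilradical.mpr
    ⟨r, by rw [← relativeFrobenius_tmul_one he, RingHom.mem_ker.mp hx, TensorProduct.zero_tmul]⟩

theorem etale_relativeFrobenius [Algebra.Etale R A] : (relativeFrobenius (A := A) he).Etale := by
  refine etale_of_etale_comp etale_includeRight ?_
  rw [relativeFrobenius_comp_includeRight]
  exact etale_comp (RingHom.etale_algebraMap.mpr inferInstance) (.of_bijective e.bijective)

theorem bijective_relativeFrobenius [Algebra.Etale R A] :
    Function.Bijective (relativeFrobenius (A := A) he) :=
  have := isPRadical_relativeFrobenius (A := A) he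
  bijective_of_etale_of_isPRadical (etale_relativeFrobenius he) p

end RelativeFrobenius

theorem relativeFrobenius_bijective_of_etale_general {R S A : Type*} [CommRing R] [CommRing S]
    [CommRing A] [Algebra R S] [Algebra R A] (p r : ℕ) [Fact p.Prime] [CharP R p]
    (e : S ≃+* R) (he : ∀ x, e (algebraMap R S x) = x ^ p ^ r) [Algebra.Etale R A] :
    ∃ F : A ⊗[R] S →+* A,
      (∀ a s, F (a ⊗ₜ s) = a ^ p ^ r * algebraMap R A (e s)) ∧ Function.Bijective F := by
  cases subsingleton_or_nontrivial A
  · let F : A ⊗[R] S →+* A := tensorProductLiftRingHom (.id A) ((algebraMap R A).comp e)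
      (RingHom.ext fun _ ↦ Subsingleton.elim _ _)
    have : Subsingleton (A ⊗[R] S) :=
      (Algebra.TensorProduct.includeLeftRingHom : A →+* A ⊗[R] S).codomain_trivial
    exact ⟨F, fun _ _ ↦ Subsingleton.elim _ _, Function.injective_of_subsingleton _,
      Function.surjective_to_subsingleton _⟩
  · have : CharP A p := (CharP.charP_iff_prime_eq_zero Fact.out).mpr
      (by rw [← map_natCast (algebraMap R A), CharP.cast_eq_zero, map_zero])
    have : ExpChar A p := .prime Fact.out
    exact ⟨relativeFrobenius he, relativeFrobenius_tmul he, bijective_relativeFrobenius he⟩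

/-- **Lemma.** Let `k` be a field of characteristic `p > 0`, `q = p ^ r` with `r ≥ 1`, and let
`A` be an étale `k`-algebra (formally étale and of finite presentation). Then the relative
Frobenius `F : A^{(q)} → A`, the unique `k`-algebra homomorphism with `F (a ⊗ λ) = a ^ q · λ`,
is bijective. -/
theorem relativeFrobenius_bijective_of_etale
    (k : Type u) [Field k] (p : ℕ) [Fact p.Prime] [CharP k p] (r : ℕ) (hr : 1 ≤ r)
    (A : Type u) [CommRing A] [Algebra k A]
    [Algebra.FormallyEtale k A] [Algebra.FinitePresentation k A] :
    ∃ F : (A ⊗[k] TwistK k p r) →+* A,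
      (∀ (a : A) (l : k),
          F (a ⊗ₜ[k] TwistK.up k p r l) = a ^ p ^ r * algebraMap k A l) ∧
        Function.Bijective F := by
  have : Algebra.Etale k A := {}
  exact relativeFrobenius_bijective_of_etale_general (S := TwistK k p r) p r (RingEquiv.refl k)
    fun _ ↦ rfl
end

section
/- Let L/K be a finite purely inseparable extension of fields of characteristic p > 0 of degree p^n. Let R := L^{(p^n)} be the Frobenius twist of L over K by the n-th iterate of Frobenius. Then the structure homomorphism K → R/nil(R) is an isomorphism of K-algebras; equivalently, every element of R is congruent, modulo the nilradical, to an element in the image of K. -/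
open scoped TensorProduct

universe u

/-- The tautological identification of `K` with its copy `TwistK K p r`, as a ring
homomorphism. -/
def TwistK.upRingHom (K : Type u) [Field K] (p r : ℕ) : K →+* TwistK K p r :=
  RingHom.id K

/-- The structure homomorphism `K → R/nil(R)` for `R := L^{(p^n)}` the Frobenius twist of `L`
over `K` (with `R` regarded as a `K`-algebra through the right-hand tensor factor):
`λ ↦ (1 ⊗ λ) mod nil(R)`. -/
noncomputable def twistStructureMap (K : Type u) [Field K] (p n : ℕ) [Fact p.Prime] [CharP K p]
    (L : Type u) [Field L] [Algebra K L] :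
    K →+* (L ⊗[K] TwistK K p n) ⧸ nilradical (L ⊗[K] TwistK K p n) :=
  (Ideal.Quotient.mk (nilradical (L ⊗[K] TwistK K p n))).comp
    ((Algebra.TensorProduct.includeRight :
        TwistK K p n →ₐ[K] L ⊗[K] TwistK K p n).toRingHom.comp (TwistK.upRingHom K p n))

/-!
An element `a` of `L` of degree `d` satisfies `a ^ d ∈ K` by pure inseparability, and `d` divides
`[L : K] = p ^ n`, so `a ^ p ^ n = c` with `c` in `K`. In the twist,
`(a ⊗ 1) ^ p ^ n = c ⊗ 1 = (1 ⊗ c) ^ p ^ n`, because `K` acts on the right-hand factor through the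
Frobenius. In a reduced ring of characteristic `p`, each element has at most one `p ^ n`-th root,
so `a ⊗ 1` and `1 ⊗ c` agree modulo the nilradical.
-/

section PurelyInseparable

variable (K : Type*) {L : Type*} [Field K] [Field L] [Algebra K L] [IsPurelyInseparable K L]

theorem pow_natDegree_minpoly_mem_range_algebraMap (a : L) :
    a ^ (minpoly K a).natDegree ∈ (algebraMap K L).range := by
  rw [IsPurelyInseparable.minpoly_natDegree_eq]
  exact IsPurelyInseparable.elemExponent_def K a

theorem pow_finrank_mem_range_algebraMap (a : L) :
    a ^ Module.finrank K L ∈ (algebraMap K L).range := by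
  obtain ⟨d, hd⟩ := minpoly.degree_dvd (IsPurelyInseparable.isIntegral' K a)
  rw [hd, pow_mul]
  exact pow_mem (pow_natDegree_minpoly_mem_range_algebraMap K a) d

end PurelyInseparable

section TensorProduct

variable {R A B S : Type*} [CommSemiring R] [Semiring A] [Semiring B] [Algebra R A] [Algebra R B]

open Algebra.TensorProduct in
theorem comp_includeRight_surjective [CommSemiring S] [Algebra R S] {f : A ⊗[R] B →ₐ[R] S}
    (hf : Function.Surjective f)
    (h : (f.comp includeLeft).range ≤ (f.comp includeRight).range) :
    Function.Surjective (f.comp includeRight) := by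
  have hprod : productMap (f.comp includeLeft) (f.comp includeRight) = f := by
    ext <;> simp [← map_mul]
  rw [← AlgHom.range_eq_top, ← sup_eq_right.mpr h, ← productMap_range, hprod,
    AlgHom.range_eq_top]
  exact hf

theorem algHom_apply_eq_of_pow_eq_algebraMap [CommRing S] [IsReduced S] [Algebra R S]
    (p : ℕ) [ExpChar S p] (f : A →ₐ[R] S) (g : B →ₐ[R] S) {n : ℕ} {a : A} {b : B} {c : R}
    (ha : a ^ p ^ n = algebraMap R A c) (hb : b ^ p ^ n = algebraMap R B c) : f a = g b := by
  apply iterateFrobenius_inj S p n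
  simp only [iterateFrobenius_def, ← map_pow, ha, hb, AlgHom.commutes]

end TensorProduct

section Nilradical

variable (R : Type*) [CommRing R]

instance isReduced_quotient_nilradical : IsReduced (R ⧸ nilradical R) :=
  (Ideal.isRadical_iff_quotient_reduced _).mp (Ideal.radical_isRadical 0)

instance nontrivial_quotient_nilradical [Nontrivial R] : Nontrivial (R ⧸ nilradical R) :=
  Ideal.Quotient.nontrivial_iff.mpr fun h ↦
    not_isNilpotent_one (mem_nilradical.mp ((Ideal.eq_top_iff_one _).mp h))

end Nilradical

theorem TwistK.upRingHom_pow (K : Type u) [Field K] (p n : ℕ) [Fact p.Prime] [CharP K p] (c : K) :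
    TwistK.upRingHom K p n c ^ p ^ n = algebraMap K (TwistK K p n) c :=
  rfl

open Algebra.TensorProduct in
theorem twist_reduction_trivial_of_purelyInseparable_general
    (K L : Type u) [Field K] [Field L] [Algebra K L]
    (p : ℕ) [Fact p.Prime] [CharP K p] (n : ℕ)
    (hpow : ∀ a : L, a ^ p ^ n ∈ (algebraMap K L).range) :
    Function.Bijective (twistStructureMap K p n L) := by
  refine ⟨(twistStructureMap K p n L).injective, ?_⟩
  let R := L ⊗[K] TwistK K p n
  let π : R →ₐ[K] R ⧸ nilradical R := Ideal.Quotient.mkₐ K (nilradical R)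
  have : ExpChar (R ⧸ nilradical R) p :=
    expChar_of_injective_ringHom (twistStructureMap K p n L).injective p
  have hrange : (π.comp includeLeft).range ≤ (π.comp includeRight).range := by
    rintro _ ⟨a, rfl⟩
    obtain ⟨c, hc⟩ := hpow a
    exact ⟨TwistK.upRingHom K p n c, (algHom_apply_eq_of_pow_eq_algebraMap p _ _ hc.symm
      (TwistK.upRingHom_pow K p n c)).symm⟩
  have hsurj : Function.Surjective (π.comp includeRight) :=
    comp_includeRight_surjective (Ideal.Quotient.mkₐ_surjective K (nilradical R)) hrange
  exact hsurj

/-- **Lemma.** Let `L/K` be a finite purely inseparable extension of fields of characteristic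
`p > 0` of degree `p ^ n`, and let `R := L^{(p^n)}` be the Frobenius twist of `L` over `K` by
the `n`-th iterate of Frobenius. Then the structure homomorphism `K → R/nil(R)` is an
isomorphism of `K`-algebras. -/
theorem twist_reduction_trivial_of_purelyInseparable
    (K L : Type u) [Field K] [Field L] [Algebra K L] [FiniteDimensional K L]
    (p : ℕ) [Fact p.Prime] [CharP K p] (n : ℕ)
    [IsPurelyInseparable K L] (hdeg : Module.finrank K L = p ^ n) :
    Function.Bijective (twistStructureMap K p n L) :=
  twist_reduction_trivial_of_purelyInseparable_general K L p n fun a ↦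
    hdeg ▸ pow_finrank_mem_range_algebraMap K a
end
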